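/- arXiv:2309.15454 — 2 statements merged into one kernel-verified Lean document; each statement's English description precedes it below -/
import Mathlib

section
/- Let V be a finite type, let E and E' be finite sets of directed edges on V, and let k be a natural number with |E'| ≤ k. If the digraph with edge set E ∪ E' has exactly one source and exactly one sink, then the number of sources of the digraph with edge set E plus the number of sinks of the digraph with edge set E is at most 2k + 2. -/
/-!
A source of `E` is either still a source of `E ∪ E'` or the head of an edge of `E'`, so adding
`E'` removes at most `|E'|` sources (`sources_card_le`); dually for sinks and tails
(`sinks_card_le`). With one source and one sink left, the total is at most `2 * (1 + k)`.
-/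

/-- The set of sources of the digraph on `V` with edge set `E`:
vertices that are not the head (second component) of any edge. -/
def sources {V : Type*} [Fintype V] [DecidableEq V] (E : Finset (V × V)) : Finset V :=
  Finset.univ.filter fun v => ∀ e ∈ E, e.2 ≠ v

/-- The set of sinks of the digraph on `V` with edge set `E`:
vertices that are not the tail (first component) of any edge. -/
def sinks {V : Type*} [Fintype V] [DecidableEq V] (E : Finset (V × V)) : Finset V :=
  Finset.univ.filter fun v => ∀ e ∈ E, e.1 ≠ v

/-- Each added edge has one head, so it destroys at most one source. -/
theorem sources_card_le {V : Type*} [Fintype V] [DecidableEq V] (E E' : Finset (V × V)) :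
    (sources E).card ≤ (sources (E ∪ E')).card + E'.card := by
  have hsub : sources E ⊆ sources (E ∪ E') ∪ E'.image Prod.snd := by
    intro v hv
    simp only [sources, Finset.mem_union, Finset.mem_filter, Finset.mem_univ, true_and,
      Finset.mem_image] at hv ⊢
    grind
  calc (sources E).card ≤ (sources (E ∪ E') ∪ E'.image Prod.snd).card := Finset.card_le_card hsub
    _ ≤ (sources (E ∪ E')).card + (E'.image Prod.snd).card := Finset.card_union_le _ _
    _ ≤ _ := Nat.add_le_add_left Finset.card_image_le _

/-- Each added edge has one tail, so it destroys at most one sink. -/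
theorem sinks_card_le {V : Type*} [Fintype V] [DecidableEq V] (E E' : Finset (V × V)) :
    (sinks E).card ≤ (sinks (E ∪ E')).card + E'.card := by
  have hsub : sinks E ⊆ sinks (E ∪ E') ∪ E'.image Prod.fst := by
    intro v hv
    simp only [sinks, Finset.mem_union, Finset.mem_filter, Finset.mem_univ, true_and,
      Finset.mem_image] at hv ⊢
    grind
  calc (sinks E).card ≤ (sinks (E ∪ E') ∪ E'.image Prod.fst).card := Finset.card_le_card hsub
    _ ≤ (sinks (E ∪ E')).card + (E'.image Prod.fst).card := Finset.card_union_le _ _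
    _ ≤ _ := Nat.add_le_add_left Finset.card_image_le _

theorem sources_sinks_card_le_of_completion {V : Type*} [Fintype V] [DecidableEq V]
    (E E' : Finset (V × V)) (k : ℕ) (hk : E'.card ≤ k)
    (hsrc : (sources (E ∪ E')).card = 1) (hsnk : (sinks (E ∪ E')).card = 1) :
    (sources E).card + (sinks E).card ≤ 2 * k + 2 := by
  have h₁ := sources_card_le E E'
  have h₂ := sinks_card_le E E'
  omega
end

section
/- Let D be a digraph on a vertex type V given by a relation such that for every pair of adjacent vertices at most one of the two directed edges is present, and let 'switch' be the predicate that a vertex of D is a source or a sink of D. Let P₁ be a path from u to w and P₂ a path from w to v, each with at least one edge, such that every consecutive pair of vertices along each path is joined by an edge of D in exactly one direction, and let P be the concatenated path from u to v through w. Then the signature of P equals the signature of P₁, followed by the junction contribution at w, followed by the signature of P₂, where the junction contribution is: the empty string if, of the two path edges incident to w (the last edge of P₁ and the first edge of P₂), one is incoming and one is outgoing at w; the one-symbol string σ (respectively σ_ℓ) if both are outgoing at w and w is (respectively is not) a switch of D; and the one-symbol string τ (respectively τ_ℓ) if both are incoming at w and w is (respectively is not) a switch of D. -/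
/-!
The signature is read off a path three consecutive vertices at a time, so induction on the part
before the edge `a w` splits it at `w` into the two partial signatures with `junction D a w b` in
between (`signature_append`). The directions of the two path edges at `w`, together with the
asymmetry of `D`, then select a single branch of `junction`.
-/

attribute [local instance] Classical.propDecidable

/-- The four-symbol alphabet `{σ, τ, σℓ, τℓ}` used in signatures. -/
inductive SigSym : Type
  | sigma   -- σ : switch vertex, both path edges outgoing
  | tau     -- τ : switch vertex, both path edges incoming
  | sigmaL  -- σℓ : local switch (non-switch vertex), both path edges outgoing
  | tauL    -- τℓ : local switch (non-switch vertex), both path edges incoming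
  deriving DecidableEq

/-- A vertex is a switch of the digraph `D` if it is a source (no incoming edge)
or a sink (no outgoing edge) of `D`. -/
def IsSwitch {V : Type*} (D : V → V → Prop) (x : V) : Prop :=
  (∀ y, ¬ D y x) ∨ (∀ y, ¬ D x y)

/-- The contribution of an internal vertex `x` of a path, with predecessor `a`
and successor `b` along the path: nothing if the two path edges at `x` are one
incoming and one outgoing; `σ`/`σℓ` if both are outgoing at `x`, according to
whether `x` is a switch of `D`; `τ`/`τℓ` if both are incoming at `x`. -/
noncomputable def junction {V : Type*} (D : V → V → Prop) (a x b : V) : List SigSym :=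
  if D x a ∧ D x b then (if IsSwitch D x then [SigSym.sigma] else [SigSym.sigmaL])
  else if D a x ∧ D b x then (if IsSwitch D x then [SigSym.tau] else [SigSym.tauL])
  else []

/-- The signature of a path (given as the list of its vertices): walk along the
path and append, at each internal vertex, its junction contribution. -/
noncomputable def signature {V : Type*} (D : V → V → Prop) : List V → List SigSym
  | a :: x :: b :: rest => junction D a x b ++ signature D (x :: b :: rest)
  | _ => []

/-- Splitting a path at the internal vertex `w`: the signature is that of the part ending in the
edge `a w`, then the junction at `w`, then that of the part starting with the edge `w b`. -/
theorem signature_append {V : Type*} (D : V → V → Prop) (a w b : V) (R : List V) :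
    ∀ Q : List V, signature D (Q ++ a :: w :: b :: R) =
      signature D (Q ++ [a, w]) ++ junction D a w b ++ signature D (w :: b :: R)
  | [] => by simp [signature]
  | [q] => by simp [signature]
  | [q, r] => by simp [signature]
  | q :: r :: s :: Q => by
    have ih := signature_append D a w b R (r :: s :: Q)
    simp only [List.cons_append, List.append_assoc] at ih
    simp [signature, ih]

theorem signature_concat {V : Type*} (D : V → V → Prop)
    -- for every pair of adjacent vertices, at most one of the two directed
    -- edges is present
    (hD : ∀ x y, D x y → ¬ D y x)
    (u w v a b : V) (Q₁ R₂ : List V) (P₁ P₂ P : List V)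
    -- `P₁` is a path from `u` to `w` with at least one edge, whose last edge
    -- joins `a` to `w`
    (hP₁ : P₁ = Q₁ ++ [a, w]) (hu : P₁.head? = some u)
    -- `P₂` is a path from `w` to `v` with at least one edge, whose first edge
    -- joins `w` to `b`
    (hP₂ : P₂ = w :: b :: R₂) (hv : P₂.getLast? = some v)
    -- every consecutive pair of vertices along each path is joined by an edge
    -- of `D` in exactly one direction
    (hchain₁ : P₁.Chain' fun x y => Xor' (D x y) (D y x))
    (hchain₂ : P₂.Chain' fun x y => Xor' (D x y) (D y x))
    -- `P` is the concatenation of `P₁` and `P₂` through `w`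
    (hP : P = P₁ ++ b :: R₂) :
    -- one path edge incoming and one outgoing at `w`: no junction symbol
    ((D a w ∧ D w b) ∨ (D w a ∧ D b w) →
      signature D P = signature D P₁ ++ signature D P₂) ∧
    -- both path edges outgoing at `w`, `w` a switch: symbol σ
    (D w a ∧ D w b ∧ IsSwitch D w →
      signature D P = signature D P₁ ++ [SigSym.sigma] ++ signature D P₂) ∧
    -- both path edges outgoing at `w`, `w` not a switch: symbol σℓ
    (D w a ∧ D w b ∧ ¬ IsSwitch D w →
      signature D P = signature D P₁ ++ [SigSym.sigmaL] ++ signature D P₂) ∧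
    -- both path edges incoming at `w`, `w` a switch: symbol τ
    (D a w ∧ D b w ∧ IsSwitch D w →
      signature D P = signature D P₁ ++ [SigSym.tau] ++ signature D P₂) ∧
    -- both path edges incoming at `w`, `w` not a switch: symbol τℓ
    (D a w ∧ D b w ∧ ¬ IsSwitch D w →
      signature D P = signature D P₁ ++ [SigSym.tauL] ++ signature D P₂) := by
  subst hP hP₁ hP₂
  have key := signature_append D a w b R₂ Q₁
  simp only [List.append_assoc, List.cons_append, List.nil_append] at key ⊢
  rw [key]
  -- Asymmetry of `D` makes the branches in the definition of `junction` mutually exclusive.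
  refine ⟨?_, ?_, ?_, ?_, ?_⟩
  · rintro (⟨h₁, h₂⟩ | ⟨h₁, h₂⟩) <;> simp [junction, h₁, h₂, hD _ _ h₁, hD _ _ h₂]
  all_goals
    rintro ⟨h₁, h₂, h₃⟩
    simp [junction, h₁, h₂, h₃, hD _ _ h₁]
end
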